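/- arXiv:2109.07398 — 2 statements merged into one kernel-verified Lean document; each statement's English description precedes it below -/
import Mathlib

section
/- Let λ ∈ ℝ with λ ≠ −1, and let γ₀ : ℝ² → ℝ be continuous, 2π-periodic in each variable, with torus mean ⟨γ₀⟩ = 0 and γ₀ not identically zero. Set γ₊ := max γ₀ and γ₋ := min γ₀ over [0,2π]², S* := −1/((λ+1)γ₊) if λ < −1 and S* := −1/((λ+1)γ₋) if λ > −1 (so S* > 0), and for S ∈ [0,S*) define G(S) := ⟨(1 + (λ+1)γ₀S)^{−1/(λ+1)}⟩^{−2(λ+1)}. Suppose S : [0,T) → ℝ is differentiable with S'(t) = G(S(t)) and 0 ≤ S(t) < S* for all t. Then S' is differentiable on [0,T) and S''(t) = 2(λ+1)·S'(t)^{2 + 1/(2(λ+1))}·⟨γ₀·(1 + (λ+1)γ₀S(t))^{−(λ+2)/(λ+1)}⟩ for all t ∈ [0,T). -/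
open Real MeasureTheory

/-- The average of a `2π`-biperiodic function over the torus `[0,2π]²`. -/
noncomputable def tavg (f : ℝ × ℝ → ℝ) : ℝ :=
  (∫ p in Set.Icc (0:ℝ) (2*π) ×ˢ Set.Icc (0:ℝ) (2*π), f p) / (4 * π ^ 2)

lemma aux_deriv (K : Set (ℝ × ℝ)) (hK : IsCompact K) (g : ℝ × ℝ → ℝ) (hg : Continuous g)
    (s0 r c : ℝ) (hc : 0 < c) (h : ∀ p ∈ K, c ≤ 1 + g p * s0) :
    HasDerivAt (fun s => ∫ p in K, (1 + g p * s) ^ r)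
      (∫ p in K, g p * r * (1 + g p * s0) ^ (r - 1)) s0 := by
  obtain ⟨M, hM⟩ := hK.exists_bound_of_continuousOn hg.continuousOn
  have hMpos : 0 < |M| + 1 := by positivity
  set ε : ℝ := c / (2 * (|M| + 1)) with hε
  have hεpos : 0 < ε := by positivity
  have hεM : (|M| + 1) * ε = c / 2 := by rw [hε]; field_simp
  have hpos : ∀ p ∈ K, ∀ s ∈ Metric.closedBall s0 ε, 0 < 1 + g p * s := by
    intro p hp s hs
    rw [Metric.mem_closedBall, Real.dist_eq] at hs
    have h1 : |g p * (s - s0)| ≤ (|M| + 1) * ε := by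
      rw [abs_mul]
      have := hM p hp
      rw [Real.norm_eq_abs] at this
      have h2 := le_abs_self M
      exact mul_le_mul (by linarith) hs (abs_nonneg _) hMpos.le
    have h3 := neg_abs_le (g p * (s - s0))
    have h4 := h p hp
    nlinarith
  have hcontF : ∀ q : ℝ, ContinuousOn (fun z : ℝ × (ℝ × ℝ) => (1 + g z.2 * z.1) ^ q)
      (Metric.closedBall s0 ε ×ˢ K) := by
    intro q
    apply ContinuousOn.rpow_const
    · fun_prop
    · rintro ⟨s, p⟩ ⟨hs, hp⟩
      exact Or.inl (hpos p hp s hs).ne'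
  have hslice : ∀ q : ℝ, ∀ s ∈ Metric.closedBall s0 ε,
      ContinuousOn (fun p => (1 + g p * s) ^ q) K := by
    intro q s hs
    exact (hcontF q).comp (f := fun p : ℝ × ℝ => (s, p)) (by fun_prop) (fun p hp => ⟨hs, hp⟩)
  have hs0 : s0 ∈ Metric.closedBall s0 ε := Metric.mem_closedBall_self hεpos.le
  obtain ⟨B, hB⟩ := ((isCompact_closedBall s0 ε).prod hK).exists_bound_of_continuousOn
    (f := fun z : ℝ × (ℝ × ℝ) => g z.2 * r * (1 + g z.2 * z.1) ^ (r - 1))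
    (ContinuousOn.mul (by fun_prop) (hcontF (r - 1)))
  have hms := hK.measurableSet
  refine (hasDerivAt_integral_of_dominated_loc_of_deriv_le (μ := Measure.restrict volume K)
    (F := fun s p => (1 + g p * s) ^ r)
    (F' := fun s p => g p * r * (1 + g p * s) ^ (r - 1))
    (s := Metric.closedBall s0 ε) (bound := fun _ => B)
    (Metric.closedBall_mem_nhds s0 hεpos) ?_ ?_ ?_ ?_ ?_ ?_).2
  · filter_upwards [Metric.closedBall_mem_nhds s0 hεpos] with s hs
    exact (hslice r s hs).aestronglyMeasurable hms
  · exact (hslice r s0 hs0).integrableOn_compact hK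
  · exact (ContinuousOn.mul (by fun_prop) (hslice (r - 1) s0 hs0)).aestronglyMeasurable hms
  · filter_upwards [ae_restrict_mem hms] with p hp s hs
    exact hB (s, p) ⟨hs, hp⟩
  · exact continuousOn_const.integrableOn_compact hK
  · filter_upwards [ae_restrict_mem hms] with p hp s hs
    have h1 : HasDerivAt (fun s => 1 + g p * s) (g p) s := by
      simpa using ((hasDerivAt_id s).const_mul (g p)).const_add 1
    exact h1.rpow_const (Or.inl (hpos p hp s hs).ne')

/-- the second derivative of the auxiliary function `S` solving
`S' = G(S)` with `G(S) = ⟨(1+(λ+1)γ₀S)^(−1/(λ+1))⟩^(−2(λ+1))`: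
`S'' = 2(λ+1) S'^(2+1/(2(λ+1))) ⟨γ₀ (1+(λ+1)γ₀S)^(−(λ+2)/(λ+1))⟩`. -/
theorem stmt14 (lam : ℝ) (hlam : lam ≠ -1)
    (γ0 : ℝ × ℝ → ℝ) (hcont : Continuous γ0)
    (hper1 : ∀ y : ℝ, Function.Periodic (fun x => γ0 (x, y)) (2*π))
    (hper2 : ∀ x : ℝ, Function.Periodic (fun y => γ0 (x, y)) (2*π))
    (hmean : tavg γ0 = 0) (hne : γ0 ≠ 0)
    (γp γm : ℝ)
    (hγp : IsGreatest (γ0 '' (Set.Icc (0:ℝ) (2*π) ×ˢ Set.Icc (0:ℝ) (2*π))) γp)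
    (hγm : IsLeast (γ0 '' (Set.Icc (0:ℝ) (2*π) ×ˢ Set.Icc (0:ℝ) (2*π))) γm)
    (Sstar : ℝ)
    (hSstar : Sstar = if lam < -1 then -1 / ((lam + 1) * γp) else -1 / ((lam + 1) * γm))
    (G : ℝ → ℝ)
    (hG : ∀ s ∈ Set.Ico 0 Sstar,
      G s = (tavg fun p => (1 + (lam + 1) * γ0 p * s) ^ (-1 / (lam + 1) : ℝ))
              ^ (-(2 * (lam + 1)) : ℝ))
    (T : ℝ) (S : ℝ → ℝ)
    (hS : ∀ t ∈ Set.Ico (0:ℝ) T, HasDerivWithinAt S (G (S t)) (Set.Ico 0 T) t)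
    (hrange : ∀ t ∈ Set.Ico (0:ℝ) T, 0 ≤ S t ∧ S t < Sstar) :
    ∀ t ∈ Set.Ico (0:ℝ) T,
      HasDerivWithinAt (fun s => G (S s))
        (2 * (lam + 1) * G (S t) ^ (2 + 1 / (2 * (lam + 1)) : ℝ)
          * tavg (fun p => γ0 p * (1 + (lam + 1) * γ0 p * S t) ^ (-(lam + 2) / (lam + 1) : ℝ)))
        (Set.Ico 0 T) t := by
  intro t ht
  set K : Set (ℝ × ℝ) := Set.Icc (0:ℝ) (2*π) ×ˢ Set.Icc (0:ℝ) (2*π) with hKdef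
  have hK : IsCompact K := isCompact_Icc.prod isCompact_Icc
  have ha : lam + 1 ≠ 0 := fun h => hlam (by linarith)
  obtain ⟨m, hm, hSm⟩ : ∃ m, (∀ p ∈ K, m ≤ (lam + 1) * γ0 p) ∧ Sstar = -1 / m := by
    by_cases hl : lam < -1
    · refine ⟨(lam + 1) * γp, fun p hp => ?_, by rw [hSstar, if_pos hl]⟩
      exact mul_le_mul_of_nonpos_left (hγp.2 ⟨p, hp, rfl⟩) (by linarith)
    · refine ⟨(lam + 1) * γm, fun p hp => ?_, by rw [hSstar, if_neg hl]⟩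
      exact mul_le_mul_of_nonneg_left (hγm.2 ⟨p, hp, rfl⟩) (by linarith)
  obtain ⟨h0, h1⟩ := hrange t ht
  have hm0 : m < 0 := by
    by_contra hcon
    push Not at hcon
    have : -1 / m ≤ 0 := div_nonpos_of_nonpos_of_nonneg (by norm_num) hcon
    linarith
  have hc : 0 < 1 + m * S t := by
    rw [hSm, lt_div_iff_of_neg hm0] at h1
    linarith
  have hlow : ∀ p ∈ K, 1 + m * S t ≤ 1 + (lam + 1) * γ0 p * S t := by
    intro p hp
    have := mul_le_mul_of_nonneg_right (hm p hp) h0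
    linarith
  have hd := aux_deriv K hK (fun p => (lam + 1) * γ0 p) (by fun_prop) (S t) (-1 / (lam + 1)) _ hc hlow
  set F : ℝ → ℝ := fun s => tavg fun p => (1 + (lam + 1) * γ0 p * s) ^ (-1 / (lam + 1) : ℝ) with hF
  set A : ℝ := tavg (fun p => γ0 p * (1 + (lam + 1) * γ0 p * S t) ^ (-(lam + 2) / (lam + 1) : ℝ))
    with hA
  have hFd : HasDerivAt F (-A) (S t) := by
    have h2 := hd.div_const (4 * π ^ 2)
    refine h2.congr_deriv ?_
    rw [hA, tavg, ← neg_div, ← integral_neg]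
    congr 2
    funext p
    have e : (-1 / (lam + 1) - 1 : ℝ) = -(lam + 2) / (lam + 1) := by field_simp; ring
    rw [e]
    field_simp
  have hFpos : 0 < F (S t) := by
    have hvol : 0 < volume K := by
      rw [hKdef, Measure.volume_eq_prod, Measure.prod_prod, Real.volume_Icc]
      have : 0 < ENNReal.ofReal (2 * π - 0) := by
        rw [ENNReal.ofReal_pos]; have := Real.pi_pos; linarith
      exact ENNReal.mul_pos this.ne' this.ne'
    have hcts : ContinuousOn (fun p => (1 + (lam + 1) * γ0 p * S t) ^ (-1 / (lam + 1) : ℝ)) K := by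
      apply ContinuousOn.rpow_const
      · fun_prop
      · intro p hp
        exact Or.inl (hc.trans_le (hlow p hp)).ne'
    have hpp : ∀ p ∈ K, 0 < (1 + (lam + 1) * γ0 p * S t) ^ (-1 / (lam + 1) : ℝ) :=
      fun p hp => Real.rpow_pos_of_pos (hc.trans_le (hlow p hp)) _
    refine div_pos ?_ (by have := Real.pi_pos; positivity)
    rw [setIntegral_pos_iff_support_of_nonneg_ae]
    · refine hvol.trans_le (measure_mono fun p hp => ⟨(hpp p hp).ne', hp⟩)
    · filter_upwards [ae_restrict_mem hK.measurableSet] with p hp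
      exact (hpp p hp).le
    · exact hcts.integrableOn_compact hK
  have hGF : ∀ u ∈ Set.Ico (0:ℝ) T, G (S u) = F (S u) ^ (-(2 * (lam + 1)) : ℝ) :=
    fun u hu => hG _ (hrange u hu)
  have hcomp := (hFd.comp_hasDerivWithinAt t (hS t ht)).rpow_const
    (p := -(2 * (lam + 1))) (Or.inl hFpos.ne')
  refine (hcomp.congr_of_mem (fun u hu => hGF u hu) ht).congr_deriv ?_
  simp only [Function.comp]
  rw [hGF t ht, ← Real.rpow_mul hFpos.le]
  have e : -(2 * (lam + 1)) * (2 + 1 / (2 * (lam + 1))) = -(2 * (lam + 1)) + (-(2 * (lam + 1)) - 1) := by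
    field_simp; ring
  rw [e, Real.rpow_add hFpos]
  ring
end

section
/- Let λ > −1 and let γ₀ : ℝ² → ℝ be C², 2π-periodic in each variable, with torus mean ⟨γ₀⟩ = 0, not identically zero, and of generic type: γ₀ attains its minimum γ₋ over the torus at a unique point (modulo 2π-periods) at which its Hessian matrix is positive definite, and attains its maximum at a unique point (modulo periods) at which its Hessian is negative definite. Set S* := −1/((λ+1)γ₋) > 0, for S ∈ [0,S*) define G(S) := ⟨(1 + (λ+1)γ₀S)^{−1/(λ+1)}⟩^{−2(λ+1)}, and T* := ∫₀^{S*} G(S)⁻¹ dS ∈ (0,∞]. Then: (i) if −1 < λ ≤ −1/2 then T* = ∞ (the flow is regular for all time) and lim_{S→S*⁻} G(S) = 0; (ii) if −1/2 < λ ≤ 0 then T* < ∞ and lim_{S→S*⁻} G(S) = 0; (iii) if λ > 0 then lim_{S→S*⁻} G(S) > 0 and T* < ∞. -/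
open Real MeasureTheory Topology Filter ENNReal

/-- Two-sided quadratic bounds near a nondegenerate minimum. -/
lemma quad_bounds (g : ℝ × ℝ → ℝ) (hg : ContDiff ℝ 2 g) (p : ℝ × ℝ)
    (hmin : ∀ q, g p ≤ g q)
    (hH : ∀ v : ℝ × ℝ, v ≠ 0 → 0 < fderiv ℝ (fun q => fderiv ℝ g q v) p v) :
    ∃ ρ > 0, ∃ c > 0, ∃ C > 0, ∀ x : ℝ × ℝ, ‖x‖ < ρ →
      c * ‖x‖ ^ 2 ≤ g (p + x) - g p ∧ g (p + x) - g p ≤ C * ‖x‖ ^ 2 := by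
  have hd : Differentiable ℝ g := hg.differentiable (by norm_num)
  have hφ : ContDiff ℝ 1 (fderiv ℝ g) := hg.fderiv_right (by norm_num)
  have hφd : DifferentiableAt ℝ (fderiv ℝ g) p := hφ.differentiable (by norm_num) p
  set A := fderiv ℝ (fderiv ℝ g) p with hA
  have hAd : HasFDerivAt (fderiv ℝ g) A p := hφd.hasFDerivAt
  have h0 : fderiv ℝ g p = 0 :=
    IsLocalMin.fderiv_eq_zero (Filter.Eventually.of_forall hmin)
  have hH' : ∀ v : ℝ × ℝ, v ≠ 0 → 0 < A v v := by
    intro v hv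
    have := hH v hv
    have h2 : HasFDerivAt (fun q => fderiv ℝ g q v) (A.flip v) p := by
      have := hAd.clm_apply (hasFDerivAt_const v p)
      refine this.congr_fderiv ?_
      ext <;> simp
    rw [h2.fderiv] at this
    simpa using this
  -- compactness
  have hcont : Continuous (fun v : ℝ × ℝ => A v v) := by fun_prop
  obtain ⟨v0, hv0, hv0min⟩ := (isCompact_sphere (0 : ℝ × ℝ) 1).exists_isMinOn
    ⟨((1:ℝ), (0:ℝ)), by simp [Prod.norm_def]⟩ hcont.continuousOn
  have hv0n : ‖v0‖ = 1 := by simpa using hv0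
  have hv0ne : v0 ≠ 0 := by rintro rfl; simp at hv0n
  set k := A v0 v0 with hk
  have hkpos : 0 < k := hH' v0 hv0ne
  have hlow : ∀ x : ℝ × ℝ, k * ‖x‖ ^ 2 ≤ A x x := by
    intro x
    by_cases hx : x = 0
    · simp [hx]
    have hxn : 0 < ‖x‖ := norm_pos_iff.mpr hx
    have hm : (‖x‖⁻¹ • x) ∈ Metric.sphere (0 : ℝ × ℝ) 1 := by
      simp [norm_smul, hxn.ne']
    have := hv0min hm
    simp only [Set.mem_ofPred_eq, map_smul, smul_apply, smul_eq_mul] at this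
    rw [← hk] at this
    have e : A x x = (‖x‖⁻¹ * (‖x‖⁻¹ * A x x)) * ‖x‖ ^ 2 := by field_simp
    rw [e]
    gcongr
  have hupp : ∀ x : ℝ × ℝ, A x x ≤ ‖A‖ * ‖x‖ ^ 2 := by
    intro x
    have := A.le_opNorm₂ x x
    calc A x x ≤ ‖A x x‖ := le_abs_self _
      _ ≤ _ := by rw [pow_two, ← mul_assoc]; exact this
  have hlo := (hasFDerivAt_iff_isLittleO_nhds_zero.mp hAd).def (c := k / 2) (by positivity)
  rw [Metric.eventually_nhds_iff] at hlo
  obtain ⟨ρ, hρ, hlo⟩ := hlo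
  refine ⟨ρ, hρ, k / 4, by positivity, ‖A‖ + k, by positivity, ?_⟩
  intro x hx
  -- one-dimensional function
  have hderiv : ∀ t : ℝ, HasDerivAt (fun t : ℝ => g (p + t • x)) (fderiv ℝ g (p + t • x) x) t := by
    intro t
    have h1 : HasDerivAt (fun t : ℝ => p + t • x) x t := by
      simpa using ((hasDerivAt_id t).smul_const x).const_add p
    exact (hd (p + t • x)).hasFDerivAt.comp_hasDerivAt t h1
  have key := image_norm_le_of_norm_deriv_right_le_deriv_boundary
    (f := fun t : ℝ => g (p + t • x) - g p - t ^ 2 / 2 * A x x) (a := 0) (b := 1)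
    (f' := fun t : ℝ => fderiv ℝ g (p + t • x) x - t * A x x)
    (B := fun t => t ^ 2 / 2 * (k / 2 * ‖x‖ ^ 2)) (B' := fun t => t * (k / 2 * ‖x‖ ^ 2))
    ?_ ?_ ?_ ?_ ?_ (x := 1) (by simp)
  · simp only [one_smul, Real.norm_eq_abs, abs_le] at key
    have l1 := hlow x
    have l2 := hupp x
    have : 0 ≤ k * ‖x‖ ^ 2 := by positivity
    have : 0 ≤ ‖A‖ * ‖x‖ ^ 2 := by positivity
    constructor <;> nlinarith
  · exact (Continuous.continuousOn (by have := hd.continuous; fun_prop))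
  · intro t _
    refine HasDerivAt.hasDerivWithinAt ?_
    refine ((hderiv t).sub_const _).sub ?_
    have := (((hasDerivAt_id t).pow 2).div_const 2).mul_const (A x x)
    refine this.congr_deriv ?_
    simp
  · simp
  · intro t
    have := (((hasDerivAt_id t).pow 2).div_const 2).mul_const (k / 2 * ‖x‖ ^ 2)
    refine this.congr_deriv ?_
    simp
  · intro t ht
    have hn : ‖t • x‖ = t * ‖x‖ := by rw [norm_smul, Real.norm_of_nonneg ht.1]
    have htx : dist (t • x) 0 < ρ := by
      rw [dist_zero_right, hn]
      nlinarith [norm_nonneg x, ht.2, ht.1]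
    have := hlo htx
    rw [h0, sub_zero, hn] at this
    have e : fderiv ℝ g (p + t • x) x - t * A x x = (fderiv ℝ g (p + t • x) - A (t • x)) x := by
      simp
    rw [e]
    calc _ ≤ ‖fderiv ℝ g (p + t • x) - A (t • x)‖ * ‖x‖ := ContinuousLinearMap.le_opNorm _ _
      _ ≤ (k / 2 * (t * ‖x‖)) * ‖x‖ := by gcongr
      _ = _ := by ring

/-- The fundamental box. -/
def tbox : Set (ℝ × ℝ) := Set.Icc (0:ℝ) (2*π) ×ˢ Set.Icc (0:ℝ) (2*π)

lemma norm_rpow_integrable (r ρ : ℝ) (hr : r < 1) (hρ : 0 < ρ) :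
    IntegrableOn (fun x : ℝ × ℝ => (‖x‖ ^ 2) ^ (-r)) (Metric.ball 0 ρ) := by
  have h := (integrable_fun_norm_addHaar (volume : Measure (ℝ × ℝ))
    (f := (Set.Iio ρ).indicator (fun y : ℝ => (y ^ 2) ^ (-r)))).mpr ?_
  · rw [← integrable_indicator_iff Metric.isOpen_ball.measurableSet]
    refine h.congr (Eventually.of_forall fun x => ?_)
    simp [Set.indicator]
  · have h1 : IntegrableOn (fun x : ℝ => x ^ (1 - 2 * r)) (Set.Ioo 0 ρ) :=
      (intervalIntegral.integrableOn_Ioo_rpow_iff hρ).mpr (by linarith)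
    have h2 : IntegrableOn ((Set.Ioo 0 ρ).indicator fun x : ℝ => x ^ (1 - 2 * r)) (Set.Ioi 0) :=
      ((integrable_indicator_iff measurableSet_Ioo).mpr h1).integrableOn
    refine h2.congr_fun ?_ measurableSet_Ioi
    intro y hy
    have hy : 0 < y := hy
    by_cases hyρ : y < ρ
    · simp [hy, hyρ]
      rw [← Real.rpow_natCast, ← Real.rpow_mul hy.le, Real.rpow_sub hy, Real.rpow_one,
        div_eq_mul_inv, ← Real.rpow_neg hy.le]
      simp
    · simp [hy, hyρ]

lemma u_integrable (u : ℝ × ℝ → ℝ) (hu : Continuous u)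
    (hloc : ∀ q, 0 < u q ∨ ∃ ρ > 0, ∃ c > 0, ∀ x : ℝ × ℝ, ‖x‖ < ρ → c * ‖x‖ ^ 2 ≤ u (q + x))
    (r : ℝ) (hr0 : 0 ≤ r) (hr : r < 1) :
    IntegrableOn (fun q => u q ^ (-r)) tbox := by
  have hmeas : AEStronglyMeasurable (fun q => u q ^ (-r)) volume :=
    (hu.measurable.pow_const _).aestronglyMeasurable
  have hL : LocallyIntegrable (fun q => u q ^ (-r)) volume := by
    intro q
    rcases hloc q with hq | ⟨ρ, hρ, c, hc, h⟩
    · have he : ∀ᶠ z in 𝓝 q, u q / 2 < u z :=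
        continuousAt_const.eventually_lt hu.continuousAt (by linarith)
      obtain ⟨δ, hδ, hb⟩ := Metric.eventually_nhds_iff_ball.mp he
      refine ⟨Metric.ball q δ, Metric.ball_mem_nhds q hδ, ?_⟩
      refine Measure.integrableOn_of_bounded (M := (u q / 2) ^ (-r)) measure_ball_lt_top.ne
        hmeas ?_
      refine (ae_restrict_iff' Metric.isOpen_ball.measurableSet).mpr (Eventually.of_forall ?_)
      intro z hz
      have hz' := hb z hz
      have : 0 < u z := by linarith
      rw [Real.norm_of_nonneg (by positivity)]
      exact Real.rpow_le_rpow_of_nonpos (by linarith) hz'.le (by linarith)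
    · refine ⟨Metric.ball q ρ, Metric.ball_mem_nhds q hρ, ?_⟩
      have hmp : MeasurePreserving (fun x : ℝ × ℝ => q + x) volume volume :=
        measurePreserving_add_left volume q
      rw [← hmp.integrableOn_comp_preimage (MeasurableEquiv.addLeft q).measurableEmbedding]
      have hpre : (fun x : ℝ × ℝ => q + x) ⁻¹' Metric.ball q ρ = Metric.ball 0 ρ := by
        ext x; simp
      rw [hpre]
      have hi := (norm_rpow_integrable r ρ hr hρ).const_mul (c ^ (-r))
      refine hi.mono' ?_ ?_
      · exact ((hu.comp (by fun_prop : Continuous fun x : ℝ × ℝ => q + x)).measurable.pow_const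
          (-r)).aestronglyMeasurable
      · have hne : ∀ᵐ x : ℝ × ℝ ∂(volume.restrict (Metric.ball 0 ρ)), x ≠ 0 :=
          ae_restrict_of_ae (Measure.ae_ne volume 0)
        filter_upwards [hne, ae_restrict_mem Metric.isOpen_ball.measurableSet] with x hx hxb
        have hxn : 0 < ‖x‖ := norm_pos_iff.mpr hx
        have hb := h x (by simpa using hxb)
        have hpos : 0 < c * ‖x‖ ^ 2 := by positivity
        simp only [Function.comp]
        rw [Real.norm_of_nonneg (Real.rpow_nonneg (by linarith) _),
          ← Real.mul_rpow hc.le (by positivity)]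
        exact Real.rpow_le_rpow_of_nonpos hpos hb (by linarith)
  exact hL.integrableOn_isCompact (isCompact_Icc.prod isCompact_Icc)

/-- The integral of the profile at parameter `t = S / S*`. -/
noncomputable def Jint (u : ℝ × ℝ → ℝ) (p t : ℝ) : ℝ := ∫ q in tbox, (1 - t + t * u q) ^ (-p)

lemma tbox_compact : IsCompact tbox := isCompact_Icc.prod isCompact_Icc

lemma tbox_meas : MeasurableSet tbox := tbox_compact.measurableSet

lemma F_ge (u : ℝ) (hu : 0 ≤ u) (t : ℝ) (ht0 : 0 ≤ t) (ht : t < 1) : 1 - t ≤ 1 - t + t * u := by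
  have : 0 ≤ t * u := by positivity
  linarith

lemma F_integrable (u : ℝ × ℝ → ℝ) (hu : Continuous u) (hu0 : ∀ q, 0 ≤ u q) (p t : ℝ)
    (ht0 : 0 ≤ t) (ht : t < 1) : IntegrableOn (fun q => (1 - t + t * u q) ^ (-p)) tbox := by
  refine ContinuousOn.integrableOn_compact tbox_compact (Continuous.continuousOn ?_)
  refine Continuous.rpow_const (by fun_prop) (fun q => Or.inl ?_)
  have := F_ge (u q) (hu0 q) t ht0 ht
  linarith

lemma F_bound (u : ℝ) (hu : 0 < u) (t : ℝ) (ht0 : 0 ≤ t) (ht : t < 1) (r : ℝ) (hr : 0 ≤ r) :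
    (1 - t + t * u) ^ (-r) ≤ 1 + u ^ (-r) := by
  rcases le_total 1 u with h | h
  · have h1 : 1 ≤ 1 - t + t * u := by nlinarith
    have := Real.rpow_le_one_of_one_le_of_nonpos h1 (by linarith : -r ≤ 0)
    have := Real.rpow_nonneg hu.le (-r)
    linarith
  · have h1 : u ≤ 1 - t + t * u := by nlinarith
    have := Real.rpow_le_rpow_of_nonpos hu h1 (by linarith : -r ≤ 0)
    linarith

lemma J_upper (u : ℝ × ℝ → ℝ) (hu : Continuous u) (hu0 : ∀ q, 0 ≤ u q)
    (hae : ∀ᵐ q, 0 < u q) (p r : ℝ) (hr0 : 0 ≤ r) (hrp : r ≤ p)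
    (hInt : IntegrableOn (fun q => u q ^ (-r)) tbox) :
    ∃ C > 0, ∀ t, 0 ≤ t → t < 1 → Jint u p t ≤ C * (1 - t) ^ (-(p - r)) := by
  have hI : IntegrableOn (fun q => 1 + u q ^ (-r)) tbox :=
    (integrableOn_const (by exact tbox_compact.measure_lt_top.ne)).add hInt
  have hnn : 0 ≤ ∫ q in tbox, (1 + u q ^ (-r)) :=
    integral_nonneg fun q => by have := Real.rpow_nonneg (hu0 q) (-r); simp only [Pi.zero_apply]; linarith
  refine ⟨(∫ q in tbox, (1 + u q ^ (-r))) + 1, by linarith, ?_⟩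
  intro t ht0 ht
  have hpos : 0 < (1 - t) ^ (-(p - r)) := Real.rpow_pos_of_pos (by linarith) _
  have : Jint u p t ≤ (∫ q in tbox, (1 + u q ^ (-r))) * (1 - t) ^ (-(p - r)) := by
    rw [← integral_mul_const]
    refine integral_mono_ae (F_integrable u hu hu0 p t ht0 ht) (hI.mul_const _) ?_
    filter_upwards [ae_restrict_of_ae hae] with q hq
    have h1 := F_ge (u q) (hu0 q) t ht0 ht
    have h2 := F_bound (u q) hq t ht0 ht r hr0
    have h3 : (1 - t + t * u q) ^ (-p) =
        (1 - t + t * u q) ^ (-r) * (1 - t + t * u q) ^ (-(p - r)) := by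
      rw [← Real.rpow_add (by linarith)]; congr 1; ring
    rw [h3]
    have h4 : (1 - t + t * u q) ^ (-(p - r)) ≤ (1 - t) ^ (-(p - r)) :=
      Real.rpow_le_rpow_of_nonpos (by linarith) h1 (by linarith)
    have := Real.rpow_nonneg (hu0 q) (-r)
    exact mul_le_mul h2 h4 (Real.rpow_nonneg (by linarith) _) (by linarith)
  nlinarith

lemma J_tendsto (u : ℝ × ℝ → ℝ) (hu : Continuous u)
    (hae : ∀ᵐ q, 0 < u q) (p : ℝ) (hp : 0 ≤ p)
    (hInt : IntegrableOn (fun q => u q ^ (-p)) tbox) :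
    Tendsto (Jint u p) (𝓝[<] 1) (𝓝 (∫ q in tbox, u q ^ (-p))) := by
  have hI : IntegrableOn (fun q => 1 + u q ^ (-p)) tbox :=
    (integrableOn_const (by exact tbox_compact.measure_lt_top.ne)).add hInt
  have hev : ∀ᶠ t : ℝ in 𝓝[<] 1, t ∈ Set.Ioo (0:ℝ) 1 := Ioo_mem_nhdsLT (by norm_num)
  refine tendsto_integral_filter_of_dominated_convergence (fun q => 1 + u q ^ (-p)) ?_ ?_ hI ?_
  · refine Eventually.of_forall fun t => ?_
    have hc : Continuous fun q => 1 - t + t * u q := by fun_prop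
    exact (hc.measurable.pow_const (-p)).aestronglyMeasurable
  · filter_upwards [hev] with t ht
    filter_upwards [ae_restrict_of_ae hae] with q hq
    have h1 := F_ge (u q) hq.le t ht.1.le ht.2
    rw [Real.norm_of_nonneg (Real.rpow_nonneg (by linarith [ht.2]) _)]
    exact F_bound (u q) hq t ht.1.le ht.2 p hp
  · filter_upwards [ae_restrict_of_ae hae] with q hq
    have hc : ContinuousAt (fun t : ℝ => (1 - t + t * u q) ^ (-p)) 1 :=
      ContinuousAt.rpow_const (by fun_prop) (Or.inl (by simpa using hq.ne'))
    have := hc.tendsto.mono_left (nhdsWithin_le_nhds (s := Set.Iio 1))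
    simpa using this

lemma tbox_pos : 0 < (volume : Measure (ℝ × ℝ)) tbox := by
  rw [tbox, Measure.volume_eq_prod, Measure.prod_prod]
  simp [Real.volume_Icc, Real.pi_pos]

lemma integral_tbox_pos (f : ℝ × ℝ → ℝ) (hf : IntegrableOn f tbox)
    (hpos : ∀ᵐ q, 0 < f q) : 0 < ∫ q in tbox, f q := by
  rw [setIntegral_pos_iff_support_of_nonneg_ae (ae_restrict_of_ae (hpos.mono fun q h => h.le)) hf]
  have : (Function.support f ∩ tbox : Set (ℝ × ℝ)) =ᵐ[volume] tbox := by
    filter_upwards [hpos] with q hq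
    have : q ∈ Function.support f := hq.ne'
    apply propext
    exact ⟨fun h => h.2, fun h => ⟨this, h⟩⟩
  rw [measure_congr this]
  exact tbox_pos

/-- A dyadic corner piece next to the minimum. -/
def corner (q0 : ℝ × ℝ) (r : ℝ) : Set (ℝ × ℝ) :=
  Set.Ioo (q0.1 + r / 2) (q0.1 + r) ×ˢ Set.Ioo q0.2 (q0.2 + r / 2)

lemma corner_meas (q0 : ℝ × ℝ) (r : ℝ) : MeasurableSet (corner q0 r) :=
  measurableSet_Ioo.prod measurableSet_Ioo

lemma corner_vol (q0 : ℝ × ℝ) (r : ℝ) (hr : 0 < r) :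
    (volume : Measure (ℝ × ℝ)).real (corner q0 r) = r ^ 2 / 4 := by
  rw [corner, Measure.volume_eq_prod, measureReal_prod_prod, Real.volume_real_Ioo_of_le (by linarith),
    Real.volume_real_Ioo_of_le (by linarith)]
  ring

lemma corner_sub (q0 : ℝ × ℝ) (ρ r : ℝ) (hr : 0 < r) (hrρ : r ≤ ρ)
    (h1 : 0 ≤ q0.1) (h2 : 0 ≤ q0.2) (h3 : q0.1 + ρ ≤ 2 * π) (h4 : q0.2 + ρ ≤ 2 * π) :
    corner q0 r ⊆ tbox := by
  rintro ⟨x, y⟩ ⟨hx, hy⟩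
  simp only [Set.mem_Ioo] at hx hy
  simp only [tbox, Set.mem_prod, Set.mem_Icc]
  refine ⟨⟨?_, ?_⟩, ?_, ?_⟩ <;> linarith

lemma corner_integral (u : ℝ × ℝ → ℝ) (hu : Continuous u) (hu0 : ∀ q, 0 ≤ u q)
    (q0 : ℝ × ℝ) (ρ C : ℝ) (hC : 0 < C)
    (h1 : 0 ≤ q0.1) (h2 : 0 ≤ q0.2) (h3 : q0.1 + ρ ≤ 2 * π) (h4 : q0.2 + ρ ≤ 2 * π)
    (hub : ∀ x : ℝ × ℝ, ‖x‖ < ρ → u (q0 + x) ≤ C * ‖x‖ ^ 2)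
    (p : ℝ) (hp : 0 ≤ p) (r t : ℝ) (hr : 0 < r) (hrρ : r ≤ ρ) (ht0 : 0 ≤ t) (ht : t < 1)
    (htr : 1 - t ≤ r ^ 2) :
    r ^ 2 / 4 * ((1 + C) * r ^ 2) ^ (-p) ≤ ∫ q in corner q0 r, (1 - t + t * u q) ^ (-p) := by
  have hs := corner_sub q0 ρ r hr hrρ h1 h2 h3 h4
  have := setIntegral_ge_of_const_le (μ := volume) (f := fun q => (1 - t + t * u q) ^ (-p))
    (c := ((1 + C) * r ^ 2) ^ (-p))
    (corner_meas q0 r) ((measure_mono hs).trans_lt tbox_compact.measure_lt_top).ne ?_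
    ((F_integrable u hu hu0 p t ht0 ht).mono_set hs)
  · rwa [corner_vol q0 r hr, smul_eq_mul] at this
  · rintro q ⟨hx, hy⟩
    simp only [Set.mem_Ioo] at hx hy
    have hn : ‖q - q0‖ < r := by
      rw [Prod.norm_def, max_lt_iff, Real.norm_eq_abs, Real.norm_eq_abs, abs_lt, abs_lt]
      simp only [Prod.fst_sub, Prod.snd_sub]
      refine ⟨⟨?_, ?_⟩, ?_, ?_⟩ <;> linarith
    have hb := hub (q - q0) (hn.trans_le hrρ)
    rw [add_sub_cancel] at hb
    have hb2 : u q ≤ C * r ^ 2 := hb.trans (by gcongr)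
    have hge := F_ge (u q) (hu0 q) t ht0 ht
    refine Real.rpow_le_rpow_of_nonpos (by linarith) ?_ (by linarith)
    have := hu0 q
    nlinarith

lemma J_lower (u : ℝ × ℝ → ℝ) (hu : Continuous u) (hu0 : ∀ q, 0 ≤ u q)
    (q0 : ℝ × ℝ) (ρ C : ℝ) (hρ : 0 < ρ) (hC : 0 < C)
    (h1 : 0 ≤ q0.1) (h2 : 0 ≤ q0.2) (h3 : q0.1 + ρ ≤ 2 * π) (h4 : q0.2 + ρ ≤ 2 * π)
    (hub : ∀ x : ℝ × ℝ, ‖x‖ < ρ → u (q0 + x) ≤ C * ‖x‖ ^ 2)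
    (p : ℝ) (hp : 0 ≤ p) :
    ∃ c > 0, ∀ t, 0 ≤ t → t < 1 → 1 - t ≤ ρ ^ 2 → c * (1 - t) ^ (1 - p) ≤ Jint u p t := by
  refine ⟨(1 + C) ^ (-p) / 4, by positivity, ?_⟩
  intro t ht0 ht htρ
  have h1t : 0 < 1 - t := by linarith
  have hr : 0 < √(1 - t) := Real.sqrt_pos.mpr h1t
  have hsq : √(1 - t) ^ 2 = 1 - t := Real.sq_sqrt h1t.le
  have hrρ : √(1 - t) ≤ ρ := by
    rw [Real.sqrt_le_left hρ.le]; exact htρ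
  have key := corner_integral u hu hu0 q0 ρ C hC h1 h2 h3 h4 hub p hp _ t hr hrρ ht0 ht hsq.ge
  have hmono : ∫ q in corner q0 √(1 - t), (1 - t + t * u q) ^ (-p) ≤ Jint u p t := by
    refine setIntegral_mono_set (F_integrable u hu hu0 p t ht0 ht) ?_
      (corner_sub q0 ρ _ hr hrρ h1 h2 h3 h4).eventuallyLE
    refine Eventually.of_forall fun q => Real.rpow_nonneg ?_ _
    have := F_ge (u q) (hu0 q) t ht0 ht
    linarith
  refine le_trans (le_of_eq ?_) (key.trans hmono)
  rw [hsq, Real.mul_rpow (by positivity) h1t.le, sub_eq_add_neg 1 p, Real.rpow_add h1t, Real.rpow_one]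
  ring

lemma J_atTop (u : ℝ × ℝ → ℝ) (hu : Continuous u) (hu0 : ∀ q, 0 ≤ u q)
    (q0 : ℝ × ℝ) (ρ C : ℝ) (hρ : 0 < ρ) (hρ1 : ρ ≤ 1) (hC : 0 < C)
    (h1 : 0 ≤ q0.1) (h2 : 0 ≤ q0.2) (h3 : q0.1 + ρ ≤ 2 * π) (h4 : q0.2 + ρ ≤ 2 * π)
    (hub : ∀ x : ℝ × ℝ, ‖x‖ < ρ → u (q0 + x) ≤ C * ‖x‖ ^ 2)
    (p : ℝ) (hp : 1 ≤ p) :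
    Tendsto (Jint u p) (𝓝[<] 1) atTop := by
  set k := (1 + C) ^ (-p) / 4 with hk
  have hkpos : 0 < k := by positivity
  rw [tendsto_atTop]
  intro M
  obtain ⟨N, hN⟩ := exists_nat_ge (M / k)
  have hN' : M ≤ N * k := by rwa [div_le_iff₀ hkpos] at hN
  set r : ℕ → ℝ := fun n => ρ * (1 / 2) ^ n with hrdef
  have hrpos : ∀ n, 0 < r n := fun n => by positivity
  have hrle : ∀ n, r n ≤ ρ := fun n => by
    have : ((1:ℝ) / 2) ^ n ≤ 1 := pow_le_one₀ (by norm_num) (by norm_num)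
    simp only [hrdef]; nlinarith
  have hanti : Antitone r := by
    intro m n hmn
    simp only [hrdef]
    exact mul_le_mul_of_nonneg_left (pow_le_pow_of_le_one (by norm_num) (by norm_num) hmn) hρ.le
  have hev : ∀ᶠ t : ℝ in 𝓝[<] 1, t ∈ Set.Ioo (max 0 (1 - r N ^ 2)) 1 :=
    Ioo_mem_nhdsLT (by have := hrpos N; simp; positivity)
  filter_upwards [hev] with t ht
  have ht0 : 0 ≤ t := (le_max_left _ _).trans ht.1.le
  have ht1 := ht.2
  have htN : 1 - t ≤ r N ^ 2 := by
    have := (le_max_right 0 (1 - r N ^ 2)).trans ht.1.le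
    linarith
  have hsub : (⋃ n ∈ Finset.range N, corner q0 (r n)) ⊆ tbox :=
    Set.iUnion₂_subset fun n _ => corner_sub q0 ρ _ (hrpos n) (hrle n) h1 h2 h3 h4
  have hInt := F_integrable u hu hu0 p t ht0 ht1
  have hmono : ∫ q in (⋃ n ∈ Finset.range N, corner q0 (r n)), (1 - t + t * u q) ^ (-p)
      ≤ Jint u p t := by
    refine setIntegral_mono_set hInt ?_ hsub.eventuallyLE
    refine Eventually.of_forall fun q => Real.rpow_nonneg ?_ _
    have := F_ge (u q) (hu0 q) t ht0 ht1
    linarith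
  have hdis : ∀ m n, m < n → Disjoint (corner q0 (r m)) (corner q0 (r n)) := by
    intro m n hmn
    rw [Set.disjoint_left]
    rintro q ⟨hx, _⟩ ⟨hx', _⟩
    have h5 : r n ≤ r m / 2 := by
      have : r (m + 1) = r m / 2 := by simp only [hrdef, pow_succ]; ring
      rw [← this]; exact hanti hmn
    have := hx.1
    have := hx'.2
    linarith
  rw [integral_biUnion_finset _ (fun n _ => corner_meas q0 _) ?_
    (fun n _ => hInt.mono_set (corner_sub q0 ρ _ (hrpos n) (hrle n) h1 h2 h3 h4))] at hmono
  · refine hN'.trans (le_trans ?_ hmono)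
    have : ∀ n ∈ Finset.range N, k ≤ ∫ q in corner q0 (r n), (1 - t + t * u q) ^ (-p) := by
      intro n hn
      have hnN : n ≤ N := (Finset.mem_range.mp hn).le
      have hle : 1 - t ≤ r n ^ 2 :=
        htN.trans (pow_le_pow_left₀ (hrpos N).le (hanti hnN) 2)
      refine le_trans ?_ (corner_integral u hu hu0 q0 ρ C hC h1 h2 h3 h4 hub p (by linarith)
        (r n) t (hrpos n) (hrle n) ht0 ht1 hle)
      have hr2 : 0 < r n ^ 2 := pow_pos (hrpos n) 2
      have hr21 : r n ^ 2 ≤ 1 := pow_le_one₀ (hrpos n).le ((hrle n).trans hρ1)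
      rw [Real.mul_rpow (by positivity) hr2.le]
      have h6 : (r n ^ 2) ^ (-1 : ℝ) ≤ (r n ^ 2) ^ (-p) :=
        Real.rpow_le_rpow_of_exponent_ge hr2 hr21 (by linarith)
      rw [Real.rpow_neg_one] at h6
      have h7 : 1 ≤ r n ^ 2 * (r n ^ 2) ^ (-p) := by
        calc 1 = r n ^ 2 * (r n ^ 2)⁻¹ := (mul_inv_cancel₀ hr2.ne').symm
          _ ≤ _ := by gcongr
      calc k = k * 1 := by ring
        _ ≤ k * (r n ^ 2 * (r n ^ 2) ^ (-p)) := by gcongr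
        _ = _ := by rw [hk]; ring
    have := Finset.sum_le_sum this
    simpa using this
  · intro m _ n _ hmn
    rcases lt_or_gt_of_ne hmn with h | h
    · exact hdis m n h
    · exact (hdis n m h).symm

lemma lint_finite (S κ C : ℝ) (hS : 0 < S) (hκ : κ < 1) (f : ℝ → ℝ)
    (hf : ∀ s ∈ Set.Ico 0 S, f s ≤ C * (1 - s / S) ^ (-κ)) :
    ∫⁻ s in Set.Ico (0:ℝ) S, ENNReal.ofReal (f s) < ⊤ := by
  have h1 : IntervalIntegrable (fun x : ℝ => x ^ (-κ)) volume 0 1 :=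
    intervalIntegral.intervalIntegrable_rpow' (by linarith)
  have h2 : IntervalIntegrable (fun s : ℝ => (1 - s / S) ^ (-κ)) volume 0 S := by
    have h3 := (h1.comp_sub_left 1).symm
    have h4 := h3.comp_mul_left (c := S⁻¹)
    simp only [sub_zero, sub_self, zero_div, one_div, inv_inv] at h4
    refine h4.congr (fun s _ => ?_)
    simp [div_eq_inv_mul]
  have h5 : IntegrableOn (fun s : ℝ => C * (1 - s / S) ^ (-κ)) (Set.Ico 0 S) :=
    ((intervalIntegrable_iff_integrableOn_Ico_of_le hS.le).mp h2).const_mul C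
  refine lt_of_le_of_lt ?_ h5.lintegral_lt_top
  exact setLIntegral_mono' measurableSet_Ico fun s hs => ENNReal.ofReal_le_ofReal (hf s hs)

lemma lint_inf (S s1 c : ℝ) (hs1 : 0 ≤ s1) (hs1S : s1 < S) (hc : 0 < c) (f : ℝ → ℝ)
    (hf : ∀ s ∈ Set.Ico s1 S, c * (1 - s / S)⁻¹ ≤ f s) :
    ∫⁻ s in Set.Ico (0:ℝ) S, ENNReal.ofReal (f s) = ⊤ := by
  have hS : 0 < S := by linarith
  by_contra hne
  have h0 : ∫⁻ s in Set.Ico s1 S, ENNReal.ofReal (c * (1 - s / S)⁻¹) < ⊤ := by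
    refine lt_of_le_of_lt ?_ (lt_top_iff_ne_top.mpr hne)
    refine le_trans (setLIntegral_mono' measurableSet_Ico
      fun s hs => ENNReal.ofReal_le_ofReal (hf s hs)) ?_
    exact lintegral_mono_set (Set.Ico_subset_Ico_left hs1)
  have h1 : IntegrableOn (fun s : ℝ => c * (1 - s / S)⁻¹) (Set.Ico s1 S) := by
    refine ⟨by fun_prop, ?_⟩
    rw [hasFiniteIntegral_iff_ofReal]
    · exact h0
    · filter_upwards [ae_restrict_mem measurableSet_Ico] with s hs
      have : s / S < 1 := (div_lt_one hS).mpr hs.2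
      have : 0 < 1 - s / S := by linarith
      simp only [Pi.zero_apply]
      positivity
  have h2 : IntegrableOn (fun s : ℝ => (s - S)⁻¹) (Set.Ico s1 S) := by
    have h3 : IntegrableOn (fun s : ℝ => -(c * S)⁻¹ * (c * (1 - s / S)⁻¹)) (Set.Ico s1 S) :=
      h1.const_mul (-(c * S)⁻¹)
    refine h3.congr_fun ?_ measurableSet_Ico
    intro s hs
    have : s - S ≠ 0 := by have := hs.2; intro h; linarith
    have : S - s ≠ 0 := by have := hs.2; intro h; linarith
    have e : 1 - s / S = (S - s) / S := by field_simp
    have e2 : (s - S)⁻¹ = - (S - s)⁻¹ := by rw [← inv_neg, neg_sub]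
    simp only [e, e2, inv_div]
    field_simp
  rw [← intervalIntegrable_iff_integrableOn_Ico_of_le hs1S.le, intervalIntegrable_sub_inv_iff] at h2
  rcases h2 with h | h
  · exact hs1S.ne h
  · exact h Set.right_mem_uIcc

theorem stmt19 (lam : ℝ) (hlam : -1 < lam)
    (γ0 : ℝ × ℝ → ℝ) (hsmooth : ContDiff ℝ 2 γ0)
    (hper1 : ∀ y : ℝ, Function.Periodic (fun x => γ0 (x, y)) (2*π))
    (hper2 : ∀ x : ℝ, Function.Periodic (fun y => γ0 (x, y)) (2*π))
    (hmean : tavg γ0 = 0) (hne : γ0 ≠ 0)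
    (pmin pmax : ℝ × ℝ)
    (hmin : ∀ q : ℝ × ℝ, γ0 pmin ≤ γ0 q)
    (hminU : ∀ q : ℝ × ℝ, γ0 q = γ0 pmin →
      ∃ m n : ℤ, q = pmin + (2 * π * (m:ℝ), 2 * π * (n:ℝ)))
    (hminH : ∀ v : ℝ × ℝ, v ≠ 0 → 0 < fderiv ℝ (fun q => fderiv ℝ γ0 q v) pmin v)
    (hmax : ∀ q : ℝ × ℝ, γ0 q ≤ γ0 pmax)
    (hmaxU : ∀ q : ℝ × ℝ, γ0 q = γ0 pmax →
      ∃ m n : ℤ, q = pmax + (2 * π * (m:ℝ), 2 * π * (n:ℝ)))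
    (hmaxH : ∀ v : ℝ × ℝ, v ≠ 0 → fderiv ℝ (fun q => fderiv ℝ γ0 q v) pmax v < 0)
    (Sstar : ℝ) (hSstar : Sstar = -1 / ((lam + 1) * γ0 pmin))
    (G : ℝ → ℝ)
    (hG : ∀ s ∈ Set.Ico 0 Sstar,
      G s = (tavg fun p => (1 + (lam + 1) * γ0 p * s) ^ (-1 / (lam + 1) : ℝ))
              ^ (-(2 * (lam + 1)) : ℝ))
    (Tstar : ℝ≥0∞)
    (hTstar : Tstar = ∫⁻ s in Set.Ico (0:ℝ) Sstar, ENNReal.ofReal ((G s)⁻¹)) :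
    (lam ≤ -1/2 → Tstar = ⊤ ∧ Filter.Tendsto G (𝓝[<] Sstar) (𝓝 0)) ∧
    (-1/2 < lam → lam ≤ 0 → Tstar < ⊤ ∧ Filter.Tendsto G (𝓝[<] Sstar) (𝓝 0)) ∧
    (0 < lam → (∃ L : ℝ, Filter.Tendsto G (𝓝[<] Sstar) (𝓝 L) ∧ 0 < L) ∧ Tstar < ⊤) := by
  have hγc : Continuous γ0 := hsmooth.continuous
  -- periodicity
  have hper : ∀ (q : ℝ × ℝ) (m n : ℤ), γ0 (q + (2 * π * (m:ℝ), 2 * π * (n:ℝ))) = γ0 q := by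
    rintro ⟨x, y⟩ m n
    have e1 := ((hper1 (y + 2 * π * n)).int_mul m) x
    have e2 := ((hper2 x).int_mul n) y
    beta_reduce at e1 e2
    rw [Prod.mk_add_mk, mul_comm (2 * π) (m : ℝ), e1, mul_comm (2 * π) (n : ℝ), e2]
  -- the minimum is a.e. not attained
  have haemin : ∀ᵐ q : ℝ × ℝ, γ0 pmin < γ0 q := by
    have hcount : (Set.range fun z : ℤ × ℤ =>
        pmin + (2 * π * (z.1:ℝ), 2 * π * (z.2:ℝ))).Countable := Set.countable_range _
    have h0 := hcount.measure_zero (volume : Measure (ℝ × ℝ))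
    filter_upwards [measure_eq_zero_iff_ae_notMem.mp h0] with q hq
    refine lt_of_le_of_ne (hmin q) fun h => hq ?_
    obtain ⟨m, n, hmn⟩ := hminU q h.symm
    exact ⟨(m, n), hmn.symm⟩
  have hγint : IntegrableOn γ0 tbox := hγc.continuousOn.integrableOn_compact tbox_compact
  have hI0 : ∫ q in tbox, γ0 q = 0 := by
    have h := hmean
    unfold tavg at h
    rw [_root_.div_eq_zero_iff] at h
    rcases h with h | h
    · exact h
    · exact absurd h (by positivity)
  have hneg : γ0 pmin < 0 := by
    by_contra hcon
    have := integral_tbox_pos γ0 hγint (haemin.mono fun q hq => by linarith)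
    linarith
  obtain ⟨m, hm⟩ : ∃ m, m = -γ0 pmin := ⟨_, rfl⟩
  have hmpos : 0 < m := by linarith
  obtain ⟨a, ha⟩ : ∃ a, a = lam + 1 := ⟨_, rfl⟩
  have hapos : 0 < a := by linarith
  have hSeq : Sstar = 1 / (a * m) := by
    rw [hSstar, ← ha, show γ0 pmin = -m by linarith, mul_neg, div_neg, neg_div, neg_neg]
  have hSpos : 0 < Sstar := by rw [hSeq]; positivity
  set u : ℝ × ℝ → ℝ := fun q => (γ0 q - γ0 pmin) / m with hudef
  have huc : Continuous u := by fun_prop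
  have hu0 : ∀ q, 0 ≤ u q := fun q => div_nonneg (by linarith [hmin q]) hmpos.le
  have huae : ∀ᵐ q, 0 < u q := haemin.mono fun q hq => div_pos (by linarith) hmpos
  have huper : ∀ (q : ℝ × ℝ) (m n : ℤ), u (q + (2 * π * (m:ℝ), 2 * π * (n:ℝ))) = u q := by
    intro q i j
    simp only [hudef, hper]
  obtain ⟨ρ₀, hρ₀, c, hc, C, hC, hquad⟩ := quad_bounds γ0 hsmooth pmin hmin hminH
  have hulow : ∀ x : ℝ × ℝ, ‖x‖ < ρ₀ → c / m * ‖x‖ ^ 2 ≤ u (pmin + x) := by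
    intro x hx
    simp only [hudef]
    rw [div_mul_eq_mul_div]
    exact div_le_div_of_nonneg_right (hquad x hx).1 hmpos.le
  have huupp : ∀ x : ℝ × ℝ, ‖x‖ < ρ₀ → u (pmin + x) ≤ C / m * ‖x‖ ^ 2 := by
    intro x hx
    simp only [hudef]
    rw [div_mul_eq_mul_div]
    exact div_le_div_of_nonneg_right (hquad x hx).2 hmpos.le
  have hloc : ∀ q, 0 < u q ∨
      ∃ ρ > 0, ∃ c > 0, ∀ x : ℝ × ℝ, ‖x‖ < ρ → c * ‖x‖ ^ 2 ≤ u (q + x) := by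
    intro q
    rcases (hmin q).lt_or_eq with h | h
    · exact Or.inl (div_pos (by linarith) hmpos)
    · right
      refine ⟨ρ₀, hρ₀, c / m, by positivity, fun x hx => ?_⟩
      obtain ⟨i, j, hij⟩ := hminU q h.symm
      rw [hij, add_right_comm, huper]
      exact hulow x hx
  -- representative of the minimum in the box
  obtain ⟨q0, ρ, hρ, hρ1, h1, h2, h3, h4, hub⟩ : ∃ (q0 : ℝ × ℝ) (ρ : ℝ), 0 < ρ ∧ ρ ≤ 1 ∧
      0 ≤ q0.1 ∧ 0 ≤ q0.2 ∧ q0.1 + ρ ≤ 2 * π ∧ q0.2 + ρ ≤ 2 * π ∧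
      ∀ x : ℝ × ℝ, ‖x‖ < ρ → u (q0 + x) ≤ C / m * ‖x‖ ^ 2 := by
    have htwopi : 0 < 2 * π := by positivity
    have hfl : ∀ x : ℝ, 0 ≤ x + 2 * π * ((-⌊x / (2 * π)⌋ : ℤ) : ℝ) ∧
        x + 2 * π * ((-⌊x / (2 * π)⌋ : ℤ) : ℝ) < 2 * π := by
      intro x
      have f1 := Int.floor_le (x / (2 * π))
      have f2 := Int.lt_floor_add_one (x / (2 * π))
      rw [le_div_iff₀ htwopi] at f1
      rw [div_lt_iff₀ htwopi] at f2
      push_cast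
      constructor <;> nlinarith
    obtain ⟨i, hi⟩ : ∃ i : ℤ, i = -⌊pmin.1 / (2 * π)⌋ := ⟨_, rfl⟩
    obtain ⟨j, hj⟩ : ∃ j : ℤ, j = -⌊pmin.2 / (2 * π)⌋ := ⟨_, rfl⟩
    have hi' := hfl pmin.1
    have hj' := hfl pmin.2
    rw [← hi] at hi'
    rw [← hj] at hj'
    set q0 : ℝ × ℝ := pmin + (2 * π * (i:ℝ), 2 * π * (j:ℝ)) with hq0
    have e1 : q0.1 = pmin.1 + 2 * π * (i:ℝ) := rfl
    have e2 : q0.2 = pmin.2 + 2 * π * (j:ℝ) := rfl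
    rw [← e1] at hi'
    rw [← e2] at hj'
    refine ⟨q0, min (min ρ₀ 1) (min (2 * π - q0.1) (2 * π - q0.2)), ?_, ?_, hi'.1, hj'.1, ?_, ?_, ?_⟩
    · refine lt_min (lt_min hρ₀ one_pos) (lt_min ?_ ?_) <;> linarith
    · exact (min_le_left _ _).trans (min_le_right _ _)
    · have := (min_le_right (min ρ₀ 1) (min (2 * π - q0.1) (2 * π - q0.2))).trans (min_le_left _ _)
      linarith
    · have := (min_le_right (min ρ₀ 1) (min (2 * π - q0.1) (2 * π - q0.2))).trans (min_le_right _ _)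
      linarith
    · intro x hx
      rw [hq0, add_right_comm, huper]
      exact huupp x (hx.trans_le ((min_le_left _ _).trans (min_le_left _ _)))
  have hCm : 0 < C / m := by positivity
  obtain ⟨p, hp⟩ : ∃ p, p = 1 / a := ⟨_, rfl⟩
  have hppos : 0 < p := by rw [hp]; positivity
  have hpa : p * a = 1 := by rw [hp]; field_simp
  obtain ⟨V, hV⟩ : ∃ V, V = 4 * π ^ 2 := ⟨_, rfl⟩
  have hVpos : 0 < V := by rw [hV]; positivity
  -- formula for G
  have hGJ : ∀ s ∈ Set.Ico 0 Sstar, G s = (Jint u p (s / Sstar) / V) ^ (-(2 * a)) := by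
    intro s hs
    rw [hG s hs, ← ha]
    unfold tavg Jint tbox
    rw [hV]
    congr 3
    funext q
    have e : 1 + a * γ0 q * s = 1 - s / Sstar + s / Sstar * u q := by
      simp only [hudef, hSeq]
      have : γ0 pmin = -m := by linarith
      rw [this]
      field_simp
      ring
    beta_reduce
    rw [e, hp, neg_div]
  have ht01 : ∀ s ∈ Set.Ico 0 Sstar, 0 ≤ s / Sstar ∧ s / Sstar < 1 := fun s hs =>
    ⟨div_nonneg hs.1 hSpos.le, (div_lt_one hSpos).mpr hs.2⟩
  have hJpos : ∀ t, 0 ≤ t → t < 1 → 0 < Jint u p t := by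
    intro t ht0 ht
    refine integral_tbox_pos _ (F_integrable u huc hu0 p t ht0 ht) (Eventually.of_forall fun q => ?_)
    have := F_ge (u q) (hu0 q) t ht0 ht
    exact Real.rpow_pos_of_pos (by linarith) _
  have hGinv : ∀ s ∈ Set.Ico 0 Sstar, (G s)⁻¹ = (Jint u p (s / Sstar) / V) ^ (2 * a) := by
    intro s hs
    have := hJpos _ (ht01 s hs).1 (ht01 s hs).2
    rw [hGJ s hs, Real.rpow_neg (by positivity), inv_inv]
  have htend : Tendsto (fun s => s / Sstar) (𝓝[<] Sstar) (𝓝[<] 1) := by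
    refine tendsto_nhdsWithin_iff.mpr ⟨?_, ?_⟩
    · have : ContinuousAt (fun s : ℝ => s / Sstar) Sstar := by fun_prop
      have := this.tendsto.mono_left (nhdsWithin_le_nhds (s := Set.Iio Sstar))
      rwa [div_self hSpos.ne'] at this
    · filter_upwards [self_mem_nhdsWithin] with s hs
      exact (div_lt_one hSpos).mpr hs
  have hGev : ∀ᶠ s in 𝓝[<] Sstar, (Jint u p (s / Sstar) / V) ^ (-(2 * a)) = G s := by
    filter_upwards [Ico_mem_nhdsLT hSpos] with s hs
    exact (hGJ s hs).symm
  -- G tends to zero when p ≥ 1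
  have hG0 : 1 ≤ p → Tendsto G (𝓝[<] Sstar) (𝓝 0) := by
    intro hp1
    have hJ := J_atTop u huc hu0 q0 ρ (C / m) hρ hρ1 hCm h1 h2 h3 h4 hub p hp1
    have h5 := (hJ.comp htend).atTop_div_const hVpos
    exact ((tendsto_rpow_neg_atTop (by positivity : 0 < 2 * a)).comp h5).congr' hGev
  -- finiteness of T
  have hfin : ∀ r, 0 ≤ r → r < 1 → r ≤ p → (p - r) * (2 * a) < 1 → Tstar < ⊤ := by
    intro r hr0 hr1 hrp hκ
    obtain ⟨K, hK, hJ⟩ := J_upper u huc hu0 huae p r hr0 hrp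
      (u_integrable u huc hloc r hr0 hr1)
    rw [hTstar]
    refine lint_finite Sstar ((p - r) * (2 * a)) ((K / V) ^ (2 * a)) hSpos hκ _ ?_
    intro s hs
    obtain ⟨ht0, ht1⟩ := ht01 s hs
    rw [hGinv s hs]
    have hJs := hJ _ ht0 ht1
    have hpos := hJpos _ ht0 ht1
    have h1t : 0 < 1 - s / Sstar := by linarith
    calc (Jint u p (s / Sstar) / V) ^ (2 * a)
        ≤ (K / V * (1 - s / Sstar) ^ (-(p - r))) ^ (2 * a) := by
          refine Real.rpow_le_rpow (by positivity) ?_ (by positivity)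
          rw [div_mul_eq_mul_div]
          exact div_le_div_of_nonneg_right hJs hVpos.le
      _ = _ := by
          rw [Real.mul_rpow (by positivity) (by positivity), ← Real.rpow_mul h1t.le]
          congr 2
          ring
  refine ⟨?_, ?_, ?_⟩
  · intro hl
    have ha2 : a ≤ 1 / 2 := by linarith
    have hp1 : 1 ≤ p := by rw [hp, le_div_iff₀ hapos]; linarith
    refine ⟨?_, hG0 hp1⟩
    obtain ⟨k, hk, hJ⟩ := J_lower u huc hu0 q0 ρ (C / m) hρ hCm h1 h2 h3 h4 hub p hppos.le
    rw [hTstar]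
    have hρ2 : 0 < ρ ^ 2 := by positivity
    have hρ21 : ρ ^ 2 ≤ 1 := pow_le_one₀ hρ.le hρ1
    refine lint_inf Sstar ((1 - ρ ^ 2) * Sstar) ((k / V) ^ (2 * a)) (mul_nonneg (by linarith) hSpos.le)
      (by nlinarith) (by positivity) _ ?_
    intro s hs
    have hs' : s ∈ Set.Ico 0 Sstar := ⟨le_trans (mul_nonneg (by linarith) hSpos.le) hs.1, hs.2⟩
    obtain ⟨ht0, ht1⟩ := ht01 s hs'
    have hclose : 1 - s / Sstar ≤ ρ ^ 2 := by
      have := (le_div_iff₀ hSpos).mpr hs.1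
      linarith
    rw [hGinv s hs']
    have hJs := hJ _ ht0 ht1 hclose
    have h1t : 0 < 1 - s / Sstar := by linarith
    calc (k / V) ^ (2 * a) * (1 - s / Sstar)⁻¹
        ≤ (k / V) ^ (2 * a) * (1 - s / Sstar) ^ ((1 - p) * (2 * a)) := by
          gcongr
          rw [← Real.rpow_neg_one]
          refine Real.rpow_le_rpow_of_exponent_ge h1t (by linarith) ?_
          nlinarith
      _ = (k / V * (1 - s / Sstar) ^ (1 - p)) ^ (2 * a) := by
          rw [Real.mul_rpow (by positivity) (by positivity), ← Real.rpow_mul h1t.le]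
      _ ≤ _ := by
          refine Real.rpow_le_rpow (by positivity) ?_ (by positivity)
          rw [div_mul_eq_mul_div]
          exact div_le_div_of_nonneg_right hJs hVpos.le
  · intro hl hl0
    have ha2 : 1 / 2 < a := by linarith
    have hp1 : 1 ≤ p := by rw [hp, le_div_iff₀ hapos]; linarith
    have hp2 : p < 2 := by rw [hp, div_lt_iff₀ hapos]; linarith
    refine ⟨?_, hG0 hp1⟩
    refine hfin ((p / 2 + 1) / 2) (by linarith) (by linarith) (by linarith) ?_
    nlinarith
  · intro hl
    have ha1 : 1 < a := by linarith
    have hp1 : p < 1 := by rw [hp, div_lt_iff₀ hapos]; linarith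
    have hInt := u_integrable u huc hloc p hppos.le hp1
    refine ⟨?_, hfin p hppos.le hp1 le_rfl (by simp)⟩
    have hJ := J_tendsto u huc huae p hppos.le hInt
    have hLpos : 0 < ∫ q in tbox, u q ^ (-p) :=
      integral_tbox_pos _ hInt (huae.mono fun q hq => Real.rpow_pos_of_pos hq _)
    refine ⟨((∫ q in tbox, u q ^ (-p)) / V) ^ (-(2 * a)), ?_, by positivity⟩
    have h5 := (hJ.comp htend).div_const V
    exact (h5.rpow_const (Or.inl (by positivity))).congr' hGev
end
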